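/- Let M be a CBM over (A,Σ) in which every event is the endpoint of some matching edge (no internal events), and let k ≥ 1. Define the relation ⇝_k on the events of M by: f ⇝_k e if and only if for some d ∈ DS and some i ≥ 1, e is the (i+k)-th write event on d and f is the i-th read event from d, where write events on d (events that are sources of ▷^d-edges) are counted in the process order on the events of Writer(d), and read events from d (targets of ▷^d-edges) in the process order on the events of Reader(d). Then M is ∃k-bounded if and only if the relation < ∪ ⇝_k is acyclic. -/

import Mathlib

/-! ### Architectures and concurrent behaviors with matching (CBMs) -/

/-- The three kinds of data structures. -/
inductive DSKind : Type
  | stack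
  | queue
  | bag
deriving DecidableEq

/-- An architecture: a finite set of processes, a finite set of data structures
(each a stack, queue, or bag), with writer and reader processes; stacks are
written and read by the same process. -/
structure Architecture where
  Procs : Type
  DS : Type
  procsFintype : Fintype Procs
  dsFintype : Fintype DS
  procsDecEq : DecidableEq Procs
  dsDecEq : DecidableEq DS
  kind : DS → DSKind
  Writer : DS → Procs
  Reader : DS → Procs
  stack_wr : ∀ d, kind d = DSKind.stack → Writer d = Reader d

attribute [instance] Architecture.procsFintype Architecture.dsFintype
  Architecture.procsDecEq Architecture.dsDecEq

/-- Potential events: a process together with a (1-based) position. -/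
abbrev Architecture.Event (A : Architecture) : Type := A.Procs × ℕ

/-- The data of a CBM: one word per process and one matching relation per
data structure (on potential events). -/
structure PreCBM (A : Architecture) (Alph : Type) where
  word : A.Procs → List Alph
  mrel : A.DS → A.Event → A.Event → Prop

namespace PreCBM

variable {A : Architecture} {Alph : Type}

/-- `(p,i)` is an event iff `1 ≤ i ≤ |w_p|`. -/
def isEvent (M : PreCBM A Alph) (e : A.Event) : Prop :=
  1 ≤ e.2 ∧ e.2 ≤ (M.word e.1).length

/-- The set of events of `M`. -/
def events (M : PreCBM A Alph) : Set A.Event := {e | M.isEvent e}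

/-- The label of event `(p,i)` is the `i`-th letter of `w_p`. -/
def label (M : PreCBM A Alph) (e : A.Event) : Option Alph :=
  (M.word e.1)[e.2 - 1]?

/-- Process-successor relation `(p,i) → (p,i+1)`. -/
def procSucc (M : PreCBM A Alph) (e f : A.Event) : Prop :=
  M.isEvent e ∧ M.isEvent f ∧ f.1 = e.1 ∧ f.2 = e.2 + 1

/-- `e ▷ f` for some data structure. -/
def mat (M : PreCBM A Alph) (e f : A.Event) : Prop := ∃ d, M.mrel d e f

def step (M : PreCBM A Alph) (e f : A.Event) : Prop := M.procSucc e f ∨ M.mat e f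

/-- The causal order `< = (→ ∪ ▷)⁺`. -/
def lt (M : PreCBM A Alph) : A.Event → A.Event → Prop := Relation.TransGen M.step

/-- An event is internal if it is not the endpoint of any matching edge. -/
def isInternal (M : PreCBM A Alph) (e : A.Event) : Prop :=
  ¬ ∃ d f, M.mrel d e f ∨ M.mrel d f e

/-- The CBM axioms. -/
structure IsCBM (M : PreCBM A Alph) : Prop where
  mrel_valid : ∀ d e f, M.mrel d e f →
    M.isEvent e ∧ M.isEvent f ∧ e.1 = A.Writer d ∧ f.1 = A.Reader d
  disjoint : ∀ d d' e f e' f', M.mrel d e f → M.mrel d' e' f' →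
    ¬ (d = d' ∧ e = e' ∧ f = f') → e ≠ e' ∧ e ≠ f' ∧ f ≠ e' ∧ f ≠ f'
  irrefl : ∀ e, ¬ M.lt e e
  lifo : ∀ d, A.kind d = DSKind.stack → ∀ e₁ f₁ e₂ f₂,
    M.mrel d e₁ f₁ → M.mrel d e₂ f₂ → M.lt e₁ e₂ → M.lt e₂ f₁ → M.lt f₂ f₁
  fifo : ∀ d, A.kind d = DSKind.queue → ∀ e₁ f₁ e₂ f₂,
    M.mrel d e₁ f₁ → M.mrel d e₂ f₂ → M.lt e₁ e₂ → M.lt f₁ f₂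

end PreCBM

/-- Concurrent behaviors with matching over `(A, Alph)`. -/
def CBM (A : Architecture) (Alph : Type) : Type := {M : PreCBM A Alph // M.IsCBM}
/-! ### Linearizations and existential boundedness -/

namespace PreCBM

variable {A : Architecture} {Alph : Type}

/-- A linearization of `M`, presented as a list enumerating all events of `M`
without repetition, in an order extending the causal order `<`. -/
def IsLinearization (M : PreCBM A Alph) (l : List A.Event) : Prop :=
  l.Nodup ∧ (∀ e, e ∈ l ↔ M.isEvent e) ∧ l.Pairwise (fun e f => ¬ M.lt f e)

/-- `M` is `∃k`-bounded: it admits a linearization such that at any time there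
are at most `k` unmatched writes in each data structure. -/
def ExistBounded (M : PreCBM A Alph) (k : ℕ) : Prop :=
  ∃ l : List A.Event, M.IsLinearization l ∧
    ∀ (n : ℕ) (d : A.DS),
      {ef : A.Event × A.Event |
        M.mrel d ef.1 ef.2 ∧ ef.1 ∈ l.take n ∧ ef.2 ∉ l.take n}.ncard ≤ k

end PreCBM

namespace PreCBM

variable {A : Architecture} {Alph : Type}

/-- `e` is a write event on `d` (source of a `▷^d`-edge). -/
def isWriteOn (M : PreCBM A Alph) (d : A.DS) (e : A.Event) : Prop :=
  ∃ f, M.mrel d e f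

/-- `f` is a read event from `d` (target of a `▷^d`-edge). -/
def isReadOn (M : PreCBM A Alph) (d : A.DS) (f : A.Event) : Prop :=
  ∃ e, M.mrel d e f

/-- `e` is the `n`-th write event on `d`, in the process order of the events of
`Writer(d)`. -/
def writeIndex (M : PreCBM A Alph) (d : A.DS) (e : A.Event) (n : ℕ) : Prop :=
  M.isWriteOn d e ∧ {j : ℕ | 1 ≤ j ∧ j ≤ e.2 ∧ M.isWriteOn d (e.1, j)}.ncard = n

/-- `f` is the `n`-th read event from `d`, in the process order of the events
of `Reader(d)`. -/
def readIndex (M : PreCBM A Alph) (d : A.DS) (f : A.Event) (n : ℕ) : Prop :=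
  M.isReadOn d f ∧ {j : ℕ | 1 ≤ j ∧ j ≤ f.2 ∧ M.isReadOn d (f.1, j)}.ncard = n

/-- The relation `⇝_k`: `f ⇝_k e` iff, for some data structure `d` and some
`i ≥ 1`, `e` is the `(i+k)`-th write on `d` and `f` is the `i`-th read from `d`. -/
def rev (M : PreCBM A Alph) (k : ℕ) (f e : A.Event) : Prop :=
  ∃ d i, 1 ≤ i ∧ M.writeIndex d e (i + k) ∧ M.readIndex d f i

end PreCBM

namespace BoundedAux

variable {A : Architecture} {Alph : Type}

theorem exists_ith (S : Set ℕ) (hS : S.Finite) (i : ℕ) (hi : 1 ≤ i) (hc : i ≤ S.ncard) :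
    ∃ j ∈ S, {x | x ∈ S ∧ x ≤ j}.ncard = i := by
  classical
  have hfin : ∀ j, {x | x ∈ S ∧ x ≤ j}.Finite := fun j => hS.subset (fun x hx => hx.1)
  have hex : ∃ j, i ≤ {x | x ∈ S ∧ x ≤ j}.ncard := by
    obtain ⟨b, hb⟩ := hS.bddAbove
    refine ⟨b, hc.trans (le_of_eq ?_)⟩
    congr 1
    ext x
    exact ⟨fun h => ⟨h, hb h⟩, fun h => h.1⟩
  have hspec := Nat.find_spec hex
  have hmin : ∀ m, m < Nat.find hex → ¬ i ≤ {x | x ∈ S ∧ x ≤ m}.ncard :=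
    fun m hm => Nat.find_min hex hm
  generalize Nat.find hex = j at hspec hmin
  have hlow : {x | x ∈ S ∧ x < j}.ncard < i := by
    rcases Nat.eq_zero_or_pos j with h0 | h0
    · subst h0
      have : {x | x ∈ S ∧ x < 0} = ∅ := by ext x; simp
      rw [this]; simp; omega
    · have := hmin (j - 1) (by omega)
      have h2 : {x | x ∈ S ∧ x < j} = {x | x ∈ S ∧ x ≤ j - 1} := by
        ext x; simp only [Set.mem_setOf_eq]
        constructor <;> rintro ⟨h, h'⟩ <;> exact ⟨h, by omega⟩
      rw [h2]; omega
  have hlfin : {x | x ∈ S ∧ x < j}.Finite := hS.subset (fun x hx => hx.1)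
  have hj : j ∈ S := by
    by_contra hj
    have : {x | x ∈ S ∧ x ≤ j} ⊆ {x | x ∈ S ∧ x < j} := by
      rintro x ⟨h, h'⟩
      exact ⟨h, lt_of_le_of_ne h' (fun h'' => hj (h'' ▸ h))⟩
    have := Set.ncard_le_ncard this hlfin
    omega
  refine ⟨j, hj, ?_⟩
  have h1 : {x | x ∈ S ∧ x ≤ j} ⊆ insert j {x | x ∈ S ∧ x < j} := by
    rintro x ⟨h, h'⟩
    rcases h'.eq_or_lt with h'' | h''
    · left; exact h''
    · right; exact ⟨h, h''⟩
  have h2 := Set.ncard_le_ncard h1 (hlfin.insert j)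
  have h3 := Set.ncard_insert_le j {x | x ∈ S ∧ x < j}
  omega

theorem events_finite (M : PreCBM A Alph) : {e | M.isEvent e}.Finite := by
  have : {e | M.isEvent e} ⊆
      ⋃ p : A.Procs, (fun j => (p, j)) '' Set.Iic (M.word p).length := by
    rintro ⟨p, j⟩ h
    exact Set.mem_iUnion.2 ⟨p, j, h.2, rfl⟩
  exact (Set.finite_iUnion fun p => (Set.finite_Iic _).image _).subset this

theorem lt_events {M : PreCBM A Alph} (hM : M.IsCBM) {e f : A.Event} (h : M.lt e f) :
    M.isEvent e ∧ M.isEvent f := by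
  have hs : ∀ {e f}, M.step e f → M.isEvent e ∧ M.isEvent f := by
    rintro e f (h | ⟨d, h⟩)
    · exact ⟨h.1, h.2.1⟩
    · exact ⟨(hM.mrel_valid _ _ _ h).1, (hM.mrel_valid _ _ _ h).2.1⟩
  induction h with
  | single h => exact hs h
  | tail _ h ih => exact ⟨ih.1, (hs h).2⟩

theorem lt_proc (M : PreCBM A Alph) (p : A.Procs) (i j : ℕ) (hi : 1 ≤ i) (hij : i < j)
    (hj : M.isEvent (p, j)) : M.lt (p, i) (p, j) := by
  induction j, hij using Nat.le_induction with
  | base => exact Relation.TransGen.single (Or.inl ⟨⟨hi, by have := hj.2; simp at *; omega⟩, hj, rfl, rfl⟩)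
  | succ n hn ih =>
    have hn' : M.isEvent (p, n) := ⟨by simp; omega, by have := hj.2; simp at *; omega⟩
    exact Relation.TransGen.tail (ih hn') (Or.inl ⟨hn', hj, rfl, rfl⟩)

theorem take_closed {α : Type*} {T : α → α → Prop} {l : List α}
    (h : l.Pairwise (fun e f => ¬ T f e)) {x y : α} {n : ℕ} (hx : x ∈ l.take n) (hy : y ∈ l)
    (hT : T y x) : y ∈ l.take n := by
  rw [← List.take_append_drop n l] at h hy
  rcases List.mem_append.1 hy with hy | hy
  · exact hy
  · exact absurd hT ((List.pairwise_append.1 h).2.2 x hx y hy)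

/-- Writes on `d` in `P`. -/
def wr (M : PreCBM A Alph) (d : A.DS) (P : Set A.Event) : Set ℕ :=
  {j | M.isWriteOn d (A.Writer d, j) ∧ (A.Writer d, j) ∈ P}

/-- Reads on `d` in `P`. -/
def rd (M : PreCBM A Alph) (d : A.DS) (P : Set A.Event) : Set ℕ :=
  {j | M.isReadOn d (A.Reader d, j) ∧ (A.Reader d, j) ∈ P}

theorem edges_finite {M : PreCBM A Alph} (hM : M.IsCBM) (d : A.DS) :
    {ef : A.Event × A.Event | M.mrel d ef.1 ef.2}.Finite :=
  ((events_finite M).prod (events_finite M)).subset fun _ h =>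
    ⟨(hM.mrel_valid _ _ _ h).1, (hM.mrel_valid _ _ _ h).2.1⟩

theorem edge_fst {M : PreCBM A Alph} (hM : M.IsCBM) {d : A.DS} {e f e' f' : A.Event}
    (h : M.mrel d e f) (h' : M.mrel d e' f') (he : e = e') : f = f' := by
  by_contra hf
  exact (hM.disjoint d d e f e' f' h h' (fun h => hf h.2.2)).1 he

theorem edge_snd {M : PreCBM A Alph} (hM : M.IsCBM) {d : A.DS} {e f e' f' : A.Event}
    (h : M.mrel d e f) (h' : M.mrel d e' f') (hf : f = f') : e = e' := by
  by_contra he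
  exact (hM.disjoint d d e f e' f' h h' (fun h => he h.2.1)).2.2.2 hf

theorem wr_ncard {M : PreCBM A Alph} (hM : M.IsCBM) (d : A.DS) (P : Set A.Event) :
    (wr M d P).ncard = {ef : A.Event × A.Event | M.mrel d ef.1 ef.2 ∧ ef.1 ∈ P}.ncard := by
  have hinj : Set.InjOn (fun ef : A.Event × A.Event => ef.1.2)
      {ef : A.Event × A.Event | M.mrel d ef.1 ef.2 ∧ ef.1 ∈ P} := by
    rintro ⟨e, f⟩ h ⟨e', f'⟩ h' heq
    have he : e = e' := Prod.ext
      ((hM.mrel_valid _ _ _ h.1).2.2.1.trans (hM.mrel_valid _ _ _ h'.1).2.2.1.symm) heq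
    exact Prod.ext he (edge_fst hM h.1 h'.1 he)
  rw [← hinj.ncard_image]
  congr 1
  ext j
  constructor
  · rintro ⟨⟨f, h⟩, hP⟩
    exact ⟨((A.Writer d, j), f), ⟨h, hP⟩, rfl⟩
  · rintro ⟨⟨⟨p, j'⟩, f⟩, ⟨h, hP⟩, rfl⟩
    have : p = A.Writer d := (hM.mrel_valid _ _ _ h).2.2.1
    subst this
    exact ⟨⟨f, h⟩, hP⟩

theorem rd_ncard {M : PreCBM A Alph} (hM : M.IsCBM) (d : A.DS) (P : Set A.Event) :
    (rd M d P).ncard = {ef : A.Event × A.Event | M.mrel d ef.1 ef.2 ∧ ef.2 ∈ P}.ncard := by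
  have hinj : Set.InjOn (fun ef : A.Event × A.Event => ef.2.2)
      {ef : A.Event × A.Event | M.mrel d ef.1 ef.2 ∧ ef.2 ∈ P} := by
    rintro ⟨e, f⟩ h ⟨e', f'⟩ h' heq
    have he : f = f' := Prod.ext
      ((hM.mrel_valid _ _ _ h.1).2.2.2.trans (hM.mrel_valid _ _ _ h'.1).2.2.2.symm) heq
    exact Prod.ext (edge_snd hM h.1 h'.1 he) he
  rw [← hinj.ncard_image]
  congr 1
  ext j
  constructor
  · rintro ⟨⟨e, h⟩, hP⟩
    exact ⟨(e, (A.Reader d, j)), ⟨h, hP⟩, rfl⟩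
  · rintro ⟨⟨e, ⟨p, j'⟩⟩, ⟨h, hP⟩, rfl⟩
    have : p = A.Reader d := (hM.mrel_valid _ _ _ h).2.2.2
    subst this
    exact ⟨⟨e, h⟩, hP⟩

/-- `P` is a down-closed set for the causal order. -/
def Down (M : PreCBM A Alph) (P : Set A.Event) : Prop :=
  ∀ x y, M.lt y x → x ∈ P → y ∈ P

theorem pend_add {M : PreCBM A Alph} (hM : M.IsCBM) (d : A.DS) {P : Set A.Event}
    (hP : Down M P) :
    {ef : A.Event × A.Event | M.mrel d ef.1 ef.2 ∧ ef.1 ∈ P ∧ ef.2 ∉ P}.ncard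
      + (rd M d P).ncard = (wr M d P).ncard := by
  rw [rd_ncard hM, wr_ncard hM, ← Set.ncard_union_eq ?_
    ((edges_finite hM d).subset fun _ h => h.1) ((edges_finite hM d).subset fun _ h => h.1)]
  · congr 1
    ext ⟨e, f⟩
    constructor
    · rintro (h | h)
      · exact ⟨h.1, h.2.1⟩
      · exact ⟨h.1, hP _ _ (Relation.TransGen.single (Or.inr ⟨d, h.1⟩)) h.2⟩
    · rintro ⟨h, h'⟩
      by_cases hf : f ∈ P
      · exact Or.inr ⟨h, hf⟩
      · exact Or.inl ⟨h, h', hf⟩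
  · rw [Set.disjoint_left]
    exact fun _ h h' => h.2.2 h'.2

theorem wr_valid {M : PreCBM A Alph} (hM : M.IsCBM) {d : A.DS} {e : A.Event}
    (h : M.isWriteOn d e) : M.isEvent e ∧ e.1 = A.Writer d := by
  obtain ⟨f, h⟩ := h
  exact ⟨(hM.mrel_valid _ _ _ h).1, (hM.mrel_valid _ _ _ h).2.2.1⟩

theorem rd_valid {M : PreCBM A Alph} (hM : M.IsCBM) {d : A.DS} {e : A.Event}
    (h : M.isReadOn d e) : M.isEvent e ∧ e.1 = A.Reader d := by
  obtain ⟨f, h⟩ := h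
  exact ⟨(hM.mrel_valid _ _ _ h).2.1, (hM.mrel_valid _ _ _ h).2.2.2⟩

theorem wr_finite {M : PreCBM A Alph} (hM : M.IsCBM) (d : A.DS) (P : Set A.Event) :
    (wr M d P).Finite :=
  (Set.finite_Iic (M.word (A.Writer d)).length).subset fun _ h => (wr_valid hM h.1).1.2

theorem rd_finite {M : PreCBM A Alph} (hM : M.IsCBM) (d : A.DS) (P : Set A.Event) :
    (rd M d P).Finite :=
  (Set.finite_Iic (M.word (A.Reader d)).length).subset fun _ h => (rd_valid hM h.1).1.2

theorem down_le {M : PreCBM A Alph} {P : Set A.Event} (hP : Down M P) {p : A.Procs} {i j : ℕ}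
    (hi : 1 ≤ i) (hij : i ≤ j) (hj : M.isEvent (p, j)) (h : (p, j) ∈ P) : (p, i) ∈ P := by
  rcases hij.eq_or_lt with h' | h'
  · exact h' ▸ h
  · exact hP _ _ (lt_proc M p i j hi h' hj) h

/-- In a bounded prefix containing `e`, the event `f` with `f ⇝ e` is present. -/
theorem rev_mem {M : PreCBM A Alph} (hM : M.IsCBM) {k : ℕ} {P : Set A.Event} (hP : Down M P)
    (hb : ∀ d, {ef : A.Event × A.Event | M.mrel d ef.1 ef.2 ∧ ef.1 ∈ P ∧ ef.2 ∉ P}.ncard ≤ k)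
    {f e : A.Event} (h : M.rev k f e) (he : e ∈ P) : f ∈ P := by
  obtain ⟨d, i, hi, ⟨hw, hwn⟩, hr, hrn⟩ := h
  by_contra hf
  obtain ⟨p, m⟩ := e
  obtain ⟨q, m'⟩ := f
  obtain ⟨hev, rfl : p = _⟩ := wr_valid hM hw
  obtain ⟨hfv, rfl : q = _⟩ := rd_valid hM hr
  have h1 := pend_add hM d hP
  have h2 := hb d
  have h3 : i + k ≤ (wr M d P).ncard := by
    rw [← hwn]
    exact Set.ncard_le_ncard (fun j hj => ⟨hj.2.2, down_le hP hj.1 hj.2.1 hev he⟩)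
      (wr_finite hM d P)
  have h4 : (rd M d P).ncard < i := by
    rw [← hrn]
    apply Set.ncard_lt_ncard
    · refine ⟨fun j hj => ⟨(rd_valid hM hj.1).1.1, ?_, hj.1⟩, fun hsub => ?_⟩
      · by_contra hlt
        exact hf (down_le hP hfv.1 (le_of_not_ge hlt) (rd_valid hM hj.1).1 hj.2)
      · exact hf (hsub ⟨hfv.1, le_rfl, hr⟩).2
    · exact (Set.finite_Iic m').subset fun _ h => h.2.1
  omega

/-- Prefixes closed under `⇝` are bounded. -/
theorem bounded_of_closed {M : PreCBM A Alph} (hM : M.IsCBM) {k : ℕ} {P : Set A.Event}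
    (hP : Down M P) (hr : ∀ f e, M.rev k f e → e ∈ P → f ∈ P) (d : A.DS) :
    {ef : A.Event × A.Event | M.mrel d ef.1 ef.2 ∧ ef.1 ∈ P ∧ ef.2 ∉ P}.ncard ≤ k := by
  by_contra hlt
  have h1 := pend_add hM d hP
  have hne : (wr M d P).Nonempty := by
    rw [← Set.ncard_pos (wr_finite hM d P)]; omega
  obtain ⟨m, hm, hmin⟩ := Set.exists_max_image _ id (wr_finite hM d P) hne
  have hW : {j : ℕ | 1 ≤ j ∧ j ≤ m ∧ M.isWriteOn d (A.Writer d, j)} = wr M d P := by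
    ext j
    constructor
    · exact fun h => ⟨h.2.2, down_le hP h.1 h.2.1 (wr_valid hM hm.1).1 hm.2⟩
    · exact fun h => ⟨(wr_valid hM h.1).1.1, hmin j h, h.1⟩
  have hall : (wr M d P).ncard ≤ (rd M d Set.univ).ncard := by
    rw [rd_ncard hM, wr_ncard hM]
    exact Set.ncard_le_ncard (fun _ h => ⟨h.1, trivial⟩)
      ((edges_finite hM d).subset fun _ h => h.1)
  obtain ⟨j, hj, hjc⟩ := exists_ith (rd M d Set.univ) (rd_finite hM d _)
    ((wr M d P).ncard - k) (by omega) (by omega)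
  have hR : {x : ℕ | 1 ≤ x ∧ x ≤ j ∧ M.isReadOn d (A.Reader d, x)}
      = {x | x ∈ rd M d Set.univ ∧ x ≤ j} := by
    ext x
    constructor
    · exact fun h => ⟨⟨h.2.2, trivial⟩, h.2.1⟩
    · exact fun h => ⟨(rd_valid hM h.1.1).1.1, h.2, h.1.1⟩
  have hrev : M.rev k (A.Reader d, j) (A.Writer d, m) := by
    refine ⟨d, (wr M d P).ncard - k, by omega, ⟨hm.1, ?_⟩, hj.1, ?_⟩
    · show Set.ncard {j : ℕ | 1 ≤ j ∧ j ≤ m ∧ M.isWriteOn d (A.Writer d, j)} = _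
      rw [hW]; omega
    · show Set.ncard {x : ℕ | 1 ≤ x ∧ x ≤ j ∧ M.isReadOn d (A.Reader d, x)} = _
      rw [hR, hjc]
  have hjP := hr _ _ hrev hm.2
  have : {x | x ∈ rd M d Set.univ ∧ x ≤ j}.ncard ≤ (rd M d P).ncard :=
    Set.ncard_le_ncard (fun x hx => ⟨hx.1.1, down_le hP (rd_valid hM hx.1.1).1.1 hx.2
      (rd_valid hM hj.1).1 hjP⟩) (rd_finite hM d P)
  omega

theorem rev_events {M : PreCBM A Alph} (hM : M.IsCBM) {k : ℕ} {f e : A.Event}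
    (h : M.rev k f e) : M.isEvent f ∧ M.isEvent e ∧ f ≠ e := by
  obtain ⟨d, i, hi, ⟨hw, hwn⟩, hr, hrn⟩ := h
  refine ⟨(rd_valid hM hr).1, (wr_valid hM hw).1, ?_⟩
  rintro rfl
  obtain ⟨g, hg⟩ := hw
  obtain ⟨g', hg'⟩ := hr
  by_cases hc : f = g' ∧ g = f
  · rw [hc.2] at hg
    exact hM.irrefl f (Relation.TransGen.single (Or.inr ⟨d, hg⟩))
  · exact (hM.disjoint d d f g g' f hg hg' (fun h => hc h.2)).2.1 rfl

theorem exists_list {α : Type*} (T : α → α → Prop) (hT : ∀ e, ¬ Relation.TransGen T e e)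
    (s : Set α) (hs : s.Finite) :
    ∃ l : List α, l.Nodup ∧ (∀ e, e ∈ l ↔ e ∈ s) ∧ l.Pairwise (fun e f => ¬ T f e) := by
  classical
  haveI : IsPartialOrder α (Relation.ReflTransGen T) :=
    { refl := fun _ => Relation.ReflTransGen.refl
      trans := fun _ _ _ => Relation.ReflTransGen.trans
      antisymm := fun a b h h' => by
        by_contra hne
        rcases Relation.reflTransGen_iff_eq_or_transGen.1 h with h1 | h1
        · exact hne h1.symm
        · exact hT a (h1.trans_left h') }
  obtain ⟨r, hr, hle⟩ := extend_partialOrder (Relation.ReflTransGen T)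
  refine ⟨hs.toFinset.sort r, Finset.sort_nodup _ _, fun e => by simp, ?_⟩
  have hp := (Finset.pairwise_sort hs.toFinset r).and (Finset.sort_nodup hs.toFinset r)
  refine hp.imp ?_
  rintro a b ⟨hab, hne⟩ hba
  exact hne (antisymm_of r hab (hle _ _ (Relation.ReflTransGen.single hba)))

end BoundedAux

/-- Let `M` be a CBM in which every event is the endpoint of
some matching edge, and let `k ≥ 1`.  Then `M` is `∃k`-bounded iff the relation
`< ∪ ⇝_k` is acyclic. -/
theorem exist_bounded_iff_acyclic (A : Architecture) (Alph : Type)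
    [Fintype Alph] (M : CBM A Alph)
    (hNoInternal : ∀ e, M.1.isEvent e → ∃ d f, M.1.mrel d e f ∨ M.1.mrel d f e)
    (k : ℕ) (hk : 1 ≤ k) :
    (M.1.ExistBounded k ↔
      ∀ e, ¬ Relation.TransGen (fun u v => M.1.lt u v ∨ M.1.rev k u v) e e) := by
  classical
  have hM := M.2
  constructor
  · rintro ⟨l, ⟨hnd, hmem, hpw⟩, hb⟩
    have hdown : ∀ n, BoundedAux.Down M.1 {x | x ∈ l.take n} := fun n x y hyx hx =>
      BoundedAux.take_closed hpw hx ((hmem y).2 (BoundedAux.lt_events hM hyx).1) hyx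
    have hstep : ∀ u v, (M.1.lt u v ∨ M.1.rev k u v) → l.idxOf u < l.idxOf v := by
      intro u v huv
      have key : M.1.isEvent u ∧ M.1.isEvent v ∧ u ≠ v ∧
          u ∈ l.take (l.idxOf v + 1) := by
        have hv : M.1.isEvent v → v ∈ l.take (l.idxOf v + 1) := fun h =>
          (List.mem_take_iff_idxOf_lt ((hmem v).2 h)).2 (Nat.lt_succ_self _)
        rcases huv with h | h
        · have h2 := BoundedAux.lt_events hM h
          refine ⟨h2.1, h2.2, ?_, hdown _ v u h (hv h2.2)⟩
          rintro rfl
          exact hM.irrefl _ h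
        · have h2 := BoundedAux.rev_events hM h
          exact ⟨h2.1, h2.2.1, h2.2.2, BoundedAux.rev_mem hM (hdown _) (hb _) h (hv h2.2.1)⟩
      obtain ⟨hu, hv, hne, hin⟩ := key
      have h1 := (List.mem_take_iff_idxOf_lt ((hmem u).2 hu)).1 hin
      have h2 : l.idxOf u ≠ l.idxOf v := fun h =>
        hne ((List.idxOf_inj ((hmem u).2 hu)).1 h)
      omega
    intro e he
    have : ∀ v, Relation.TransGen (fun u v => M.1.lt u v ∨ M.1.rev k u v) e v →
        l.idxOf e < l.idxOf v := by
      intro v h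
      induction h with
      | single h => exact hstep _ _ h
      | tail _ h ih => exact ih.trans (hstep _ _ h)
    exact lt_irrefl _ (this e he)
  · intro hac
    obtain ⟨l, hnd, hmem, hpw⟩ := BoundedAux.exists_list _ hac _ (BoundedAux.events_finite M.1)
    refine ⟨l, ⟨hnd, hmem, hpw.imp fun h h' => h (Or.inl h')⟩, fun n d => ?_⟩
    refine BoundedAux.bounded_of_closed hM (P := {x | x ∈ l.take n}) ?_ ?_ d
    · exact fun x y hyx hx => BoundedAux.take_closed hpw hx
        ((hmem y).2 (BoundedAux.lt_events hM hyx).1) (Or.inl hyx)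
    · exact fun f e h he => BoundedAux.take_closed hpw he
        ((hmem f).2 (BoundedAux.rev_events hM h).1) (Or.inr h)
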